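/- Let R = k[x_1,…,x_d] with d ≥ 3 and let E be a torsion-free R-module of rank e and projective dimension one with μ(E) = d+e, minimal free resolution 0 → R^d →φ R^{d+e} → E → 0 where φ = [φ′ | φ″] with φ′ having d−2 columns of linear forms and φ″ two columns of quadrics, I_1(φ) = (x_1,…,x_d), and E satisfying G_d. Let σ = B(φ′) be the d×(d−2) Jacobian dual of φ′, i.e. the matrix of linear forms in T = k[y_1,…,y_{d+e}] with [y_1 … y_{d+e}]·φ′ = [x_1 … x_d]·σ. Then ht I(σ) ≥ 2, where I(σ) = I_{d−2}(σ) is the ideal of rank-sized minors of σ. -/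

import Mathlib

/-!
STATEMENT 8: With `R`, `E`, `φ = [φ′ | φ″]` as in Statement 7, let `σ = B(φ′)` be the
`d×(d−2)` Jacobian dual of `φ′`: the matrix of linear forms in `T` with
`[y_1 … y_{d+e}]·φ′ = [x_1 … x_d]·σ`.  Then `ht I(σ) ≥ 2`, where `I(σ) = I_{d−2}(σ)`.
-/

open MvPolynomial

noncomputable section

namespace Stmt8

variable (k : Type) [Field k] (d n : ℕ)

/-- `B = R ⊗_k T = k[x_1,…,x_d,y_1,…,y_n]`. -/
abbrev B := MvPolynomial (Fin d ⊕ Fin n) k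

/-- `T = k[y_1,…,y_n]`. -/
abbrev T := MvPolynomial (Fin n) k

/-- `B` is a `T`-algebra via `y_j ↦ y_j`. -/
instance : Algebra (T k n) (B k d n) :=
  ((rename Sum.inr : T k n →ₐ[k] B k d n).toRingHom).toAlgebra

/-- The bigrading weight: `bideg x_i = (1,0)`, `bideg y_j = (0,1)`. -/
def bwt : (Fin d ⊕ Fin n) → ℕ × ℕ := Sum.elim (fun _ => (1, 0)) (fun _ => (0, 1))

/-- The `x`-degree weight. -/
def wx : (Fin d ⊕ Fin n) → ℕ := Sum.elim (fun _ => 1) (fun _ => 0)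

/-- The ideal `m = (x_1,…,x_d)B`. -/
def mxB : Ideal (B k d n) := Ideal.span (Set.range fun i : Fin d => (X (Sum.inl i) : B k d n))

variable (I : Ideal (B k d n))

/-- `A = H⁰_m(S)`: elements of `S = B/I` annihilated by a power of `m`. -/
def H0 : Submodule (B k d n) (B k d n ⧸ I) :=
  ⨆ N : ℕ, Submodule.torsionBySet (B k d n) (B k d n ⧸ I)
    ((mxB k d n ^ N : Ideal (B k d n)) : Set (B k d n))

/-- The bigraded component of `S = B/I` in bidegree `p`. -/
def Scomp (p : ℕ × ℕ) : Submodule k (B k d n ⧸ I) :=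
  (weightedHomogeneousSubmodule k (bwt d n) p).map (Ideal.Quotient.mkₐ k I).toLinearMap

/-- The graded strand `S_j = ⊕_b S_{(j,b)}` of `S` in `x`-degree `j`, as a `T`-module. -/
def SxDeg (j : ℕ) : Submodule (T k n) (B k d n ⧸ I) :=
  Submodule.span (T k n) ((Ideal.Quotient.mk I) '' {g : B k d n | g.IsWeightedHomogeneous (wx d n) j})

/-- The graded strand of `S` in (possibly negative) `x`-degree `i : ℤ`. -/
def SxDegZ (i : ℤ) : Submodule (T k n) (B k d n ⧸ I) :=
  if 0 ≤ i then SxDeg k d n I i.toNat else ⊥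

/-- The graded strand `A_i = ⊕_b A_{(i,b)}` of `A = H⁰_m(S)`, as a `T`-module. -/
def AcompZ (i : ℤ) : Submodule (T k n) (B k d n ⧸ I) :=
  (H0 k d n I).restrictScalars (T k n) ⊓ SxDegZ k d n I i

/-- The graded component of `T` in (possibly negative) degree `j`. -/
def TcompZ (j : ℤ) : Submodule k (T k n) :=
  if 0 ≤ j then homogeneousSubmodule (Fin n) k j.toNat else ⊥

/-- The ideal of `t × t` minors of a matrix. -/
def minorsIdeal {R : Type} [CommRing R] {m' n' : Type} (M : Matrix m' n' R) (t : ℕ) :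
    Ideal R :=
  Ideal.span {x | ∃ (f : Fin t → m') (g : Fin t → n'), x = (M.submatrix f g).det}

/-- `ht I ≥ c`: every prime containing `I` has height (= dimension of the localization)
at least `c`. -/
def htGE {R : Type} [CommRing R] (I : Ideal R) (c : ℕ) : Prop :=
  ∀ (p : Ideal R) (_ : p.IsPrime), I ≤ p →
    (c : WithBot ℕ∞) ≤ ringKrullDim (Localization.AtPrime p)

/-
Let `[x]·σ = [y]·M`, where `M` consists of `q` columns of `φ`, and let `V` be the subscheme of
`Spec k[x, y]` cut out by these `q` equations. Its fibres over `Spec k[y]` are linear spaces, of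
dimension `d - r` where `σ` has rank `r`. If a prime of height at most one contains the maximal
minors of `σ`, it lies in `(f)` for some prime element `f`, where `σ` drops rank; the generic points
of the fibres of `V` over `(f)` and over `0` then both have dimension at least `d + n - q`.

The fibres of `V` over `Spec k[x]` are linear spaces as well, and `G_{q+1}` bounds the ranks of `M`
in such a way that a point of `V` of this dimension cannot lie over a nonzero prime. So both points
lie over the generic point of `Spec k[x]`. The fibre there is a linear space of dimension `n - q`,
hence has only one point of full dimension: the two points agree, and `f = 0`.
-/

universe v

section TranscendenceDegree

theorem trdeg_lt_of_surjective_of_not_injective {k : Type*} {A A' : Type v} [CommRing k]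
    [IsDomain k] [CommRing A] [IsDomain A] [CommRing A'] [IsDomain A'] [Algebra k A] [Algebra k A']
    [FaithfulSMul k A'] (g : A →ₐ[k] A') (hg : Function.Surjective g)
    (hg' : ¬ Function.Injective g) (hA : Algebra.trdeg k A < Cardinal.aleph0) :
    Algebra.trdeg k A' < Algebra.trdeg k A := by
  by_contra! hle
  obtain ⟨a, hga, ha⟩ : ∃ a, g a = 0 ∧ a ≠ 0 := by
    simpa [injective_iff_map_eq_zero] using hg'
  obtain ⟨ι, x, hx⟩ := exists_isTranscendenceBasis' k A'
  choose z hz using fun i => hg (x i)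
  have hgz : g ∘ z = x := funext hz
  have hz_indep : AlgebraicIndependent k z := .of_comp g (hgz ▸ hx.1)
  have hz_basis := hz_indep.isTranscendenceBasis_of_trdeg_le hA (hx.cardinalMk_eq_trdeg ▸ hle)
  have : Algebra.IsAlgebraic (Algebra.adjoin k (Set.range z)) A := hz_basis.isAlgebraic
  obtain ⟨⟨r, hr⟩, hr0, b, hb⟩ := (Algebra.IsAlgebraic.isAlgebraic
    (R := Algebra.adjoin k (Set.range z)) a).exists_nonzero_dvd (mem_nonZeroDivisors_of_ne_zero ha)
  rw [Algebra.adjoin_range_eq_range_aeval] at hr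
  obtain ⟨P, rfl⟩ := hr
  have hP : aeval x P = 0 := calc
    aeval x P = g (aeval z P) := by rw [← hgz, comp_aeval_apply]; rfl
    _ = g (a * b) := congrArg g hb
    _ = 0 := by rw [map_mul, hga, zero_mul]
  have hP0 : P = 0 := hx.1 (by rw [hP, map_zero])
  exact hr0 (Subtype.ext (by simp [hP0]))

theorem trdeg_quotient_lt_of_lt {k A : Type*} [Field k] [CommRing A] [Algebra k A]
    {p q : Ideal A} [p.IsPrime] [q.IsPrime] (h : p < q)
    (hA : Algebra.trdeg k (A ⧸ p) < Cardinal.aleph0) :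
    Algebra.trdeg k (A ⧸ q) < Algebra.trdeg k (A ⧸ p) := by
  refine trdeg_lt_of_surjective_of_not_injective (Ideal.Quotient.factorₐ k h.le)
    (Ideal.Quotient.factor_surjective h.le) (fun hinj => ?_) hA
  obtain ⟨z, hzq, hzp⟩ := SetLike.exists_of_lt h
  refine hzp (Ideal.Quotient.eq_zero_iff_mem.1 (hinj ?_))
  simpa [Ideal.Quotient.eq_zero_iff_mem] using hzq

theorem trdeg_eq_of_isFractionRing (k : Type*) (A F : Type v) [Field k] [CommRing A] [IsDomain A]
    [Algebra k A] [Field F] [Algebra A F] [Algebra k F] [IsScalarTower k A F]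
    [IsFractionRing A F] : Algebra.trdeg k F = Algebra.trdeg k A := by
  have : FaithfulSMul A F :=
    (faithfulSMul_iff_algebraMap_injective A F).2 (IsFractionRing.injective A F)
  have : Algebra.IsAlgebraic A F := IsLocalization.isAlgebraic F (nonZeroDivisors A)
  rw [← trdeg_add_eq k A (A := F), trdeg_eq_zero (R := A), add_zero]

theorem trdeg_residueField (k : Type*) {A : Type*} [Field k] [CommRing A] [Algebra k A]
    (p : Ideal A) [p.IsPrime] : Algebra.trdeg k p.ResidueField = Algebra.trdeg k (A ⧸ p) :=
  trdeg_eq_of_isFractionRing k (A ⧸ p) p.ResidueField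

theorem height_add_trdeg_residueField_le (k : Type*) {A : Type*} [Field k] [CommRing A]
    [Algebra k A] (p : Ideal A) [p.IsPrime] :
    p.height + Cardinal.toENat (Algebra.trdeg k p.ResidueField) ≤
      Cardinal.toENat (Algebra.trdeg k A) := by
  rw [trdeg_residueField]
  rcases lt_or_ge (Algebra.trdeg k A) Cardinal.aleph0 with hA | hA
  swap
  · simp [Cardinal.toENat_eq_top.2 hA]
  let g : PrimeSpectrum A → ℕ := fun q => Cardinal.toNat (Algebra.trdeg k (A ⧸ q.asIdeal))
  have hle (q : PrimeSpectrum A) : Algebra.trdeg k (A ⧸ q.asIdeal) ≤ Algebra.trdeg k A :=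
    trdeg_le_of_surjective (Ideal.Quotient.mkₐ k _) (Ideal.Quotient.mkₐ_surjective k _)
  have hg (q : PrimeSpectrum A) : (g q : Cardinal) = Algebra.trdeg k (A ⧸ q.asIdeal) :=
    Cardinal.cast_toNat_of_lt_aleph0 ((hle q).trans_lt hA)
  obtain ⟨N, hN⟩ := Cardinal.lt_aleph0.1 hA
  have hgN (q : PrimeSpectrum A) : g q ≤ N := by
    exact_mod_cast (hg q).trans_le ((hle q).trans_eq hN)
  have hmono : StrictMono fun q => N - g q := fun q q' hqq' => by
    have hlt : (g q' : Cardinal) < g q := by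
      rw [hg, hg]
      exact trdeg_quotient_lt_of_lt hqq' ((hle q).trans_lt hA)
    have := hgN q
    have : g q' < g q := by exact_mod_cast hlt
    grind
  have hheight := Order.height_le_height_apply_of_strictMono _ hmono ⟨p, ‹_›⟩
  rw [← PrimeSpectrum.height_eq_orderHeight, Order.height_nat] at hheight
  calc p.height + Cardinal.toENat (Algebra.trdeg k (A ⧸ p))
      ≤ (N - g ⟨p, ‹_›⟩ : ℕ) + (g ⟨p, ‹_›⟩ : ℕ∞) := by
        rw [← hg ⟨p, ‹_›⟩, map_natCast]
        gcongr
    _ = Cardinal.toENat (Algebra.trdeg k A) := by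
        rw [hN, map_natCast]
        exact_mod_cast Nat.sub_add_cancel (hgN _)

theorem trdeg_residueField_add_trdeg_residueField (k : Type*) {R A : Type v} [Field k]
    [CommRing R] [CommRing A] [Algebra k R] [Algebra k A] [Algebra R A] [IsScalarTower k R A]
    (p : Ideal R) [p.IsPrime] (P : Ideal A) [P.IsPrime] [P.LiesOver p]
    [Algebra (Localization.AtPrime p) (Localization.AtPrime P)]
    [Localization.AtPrime.IsLiesOverAlgebra p P] :
    Algebra.trdeg k p.ResidueField + Algebra.trdeg p.ResidueField P.ResidueField =
      Algebra.trdeg k P.ResidueField :=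
  trdeg_add_eq k p.ResidueField

theorem exists_height_eq_trdeg_residueField_eq {K ι : Type*} [Field K] [Fintype ι]
    (p : Ideal (MvPolynomial ι K)) [p.IsPrime] :
    ∃ h t : ℕ, p.height = h ∧ Algebra.trdeg K p.ResidueField = t ∧ h + t ≤ Fintype.card ι := by
  have hle := height_add_trdeg_residueField_le K p
  rw [trdeg_of_isDomain, Cardinal.mk_fintype, Cardinal.lift_natCast, map_natCast] at hle
  obtain ⟨h, hh⟩ := ENat.ne_top_iff_exists.1 (ne_top_of_le_ne_top (ENat.natCast_ne_top _)
    (le_self_add.trans hle))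
  obtain ⟨t, ht⟩ := Cardinal.lt_aleph0.1 (Cardinal.toENat_lt_top.1
    ((le_add_self.trans hle).trans_lt (ENat.natCast_lt_top _)))
  refine ⟨h, t, hh.symm, ht, ?_⟩
  rw [ht, ← hh, map_natCast] at hle
  exact_mod_cast hle

end TranscendenceDegree

section Hypersurface

variable {K ι : Type*} [Field K]

theorem vars_nonempty_of_prime {f : MvPolynomial ι K} (hf : Prime f) : f.vars.Nonempty := by
  rw [Finset.nonempty_iff_ne_empty, Ne, vars_eq_empty_iff_eq_C]
  intro hC
  refine hf.not_isUnit (hC ▸ (isUnit_iff_ne_zero.2 fun h0 => hf.ne_zero ?_).map C)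
  rw [hC, h0, map_zero]

theorem algebraicIndependent_mk_X_of_mem_vars {f : MvPolynomial ι K} {i : ι} (hi : i ∈ f.vars) :
    AlgebraicIndependent K
      fun j : {j // j ≠ i} => Ideal.Quotient.mkₐ K (Ideal.span {f}) (X (j : ι)) := by
  classical
  rw [AlgebraicIndependent, injective_iff_map_eq_zero]
  intro g hg
  have hmk : Ideal.Quotient.mk (Ideal.span {f}) (rename Subtype.val g) = 0 := by
    rw [← hg, ← Ideal.Quotient.mkₐ_eq_mk K, ← AlgHom.comp_apply]
    congr 1
    ext j
    simp
  obtain ⟨w, hw⟩ := (Ideal.Quotient.eq_zero_iff_dvd _ _).1 hmk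
  have hdeg : degreeOf i (rename Subtype.val g) = 0 := by
    by_contra hne
    obtain ⟨j, -, hj⟩ := mem_vars_rename _ _ (mem_vars_iff_degreeOf_ne_zero.2 hne)
    exact j.2 hj
  have hzero : rename Subtype.val g = 0 := by
    by_contra hne
    rw [hw] at hne hdeg
    rw [degreeOf_mul_eq (left_ne_zero_of_mul hne) (right_ne_zero_of_mul hne)] at hdeg
    exact mem_vars_iff_degreeOf_ne_zero.1 hi (Nat.eq_zero_of_add_eq_zero_right hdeg)
  exact rename_injective _ Subtype.val_injective (hzero.trans (map_zero _).symm)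

theorem card_le_trdeg_quotient_span_singleton_add_one [Fintype ι] {f : MvPolynomial ι K}
    (hf : Prime f) :
    (Fintype.card ι : Cardinal) ≤ Algebra.trdeg K (MvPolynomial ι K ⧸ Ideal.span {f}) + 1 := by
  classical
  obtain ⟨i, hi⟩ := vars_nonempty_of_prime hf
  have hle := (algebraicIndependent_mk_X_of_mem_vars hi).lift_cardinalMk_le_trdeg
  rw [Cardinal.mk_fintype, Fintype.card_subtype_compl, Fintype.card_subtype_eq,
    Cardinal.lift_natCast, Cardinal.nat_le_lift_iff] at hle
  refine le_trans ?_ (add_le_add_left hle 1)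
  exact_mod_cast Nat.le_add_of_sub_le le_rfl

theorem exists_prime_le_span_singleton_of_height_lt_two [Nonempty ι] (p : Ideal (MvPolynomial ι K))
    [hp : p.IsPrime] (h : p.height < 2) : ∃ f, Prime f ∧ p ≤ Ideal.span {f} := by
  rcases eq_or_ne p ⊥ with rfl | hbot
  · exact ⟨X (Classical.arbitrary ι), X_prime, bot_le⟩
  · obtain ⟨f, hfp, hf⟩ := hp.exists_mem_prime_of_ne_bot hbot
    have h1 : p.height = 1 := by
      refine le_antisymm (Order.le_of_lt_add_one ?_) ?_
      · rwa [one_add_one_eq_two]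
      · exact Order.one_le_iff_ne_zero.2 (mt Ideal.height_eq_zero_iff_eq_bot.1 hbot)
    exact ⟨f, hf, (Ideal.eq_span_singleton_of_height_eq_one h1 hfp hf).le⟩

end Hypersurface

section MatrixRank

theorem exists_comp_comp_eq_self {F V W : Type*} [Field F] [AddCommGroup V] [AddCommGroup W]
    [Module F V] [Module F W] (f : V →ₗ[F] W) : ∃ g : W →ₗ[F] V, f ∘ₗ g ∘ₗ f = f := by
  obtain ⟨s, hs⟩ := f.rangeRestrict.exists_rightInverse_of_surjective f.range_rangeRestrict
  obtain ⟨g, hg⟩ := LinearMap.exists_extend s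
  refine ⟨g, LinearMap.ext fun v => ?_⟩
  have hgv : g (f v) = s (f.rangeRestrict v) := LinearMap.congr_fun hg (f.rangeRestrict v)
  have hsv := congrArg Subtype.val (LinearMap.congr_fun hs (f.rangeRestrict v))
  simpa [hgv] using hsv

variable {F ι κ : Type*} [Field F] [Fintype κ]

theorem finrank_ker_vecMulLinear [Fintype ι] (M : Matrix ι κ F) :
    Module.finrank F (LinearMap.ker M.vecMulLinear) = Fintype.card ι - M.rank := by
  have hrange : Module.finrank F (LinearMap.range M.vecMulLinear) = M.rank := by
    rw [← M.rank_transpose, Matrix.rank, Matrix.mulVecLin_transpose]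
  have := M.vecMulLinear.finrank_range_add_finrank_ker
  rw [hrange, Module.finrank_pi] at this
  omega

theorem exists_leftKernel_splitting [Fintype ι] [DecidableEq ι] (M : Matrix ι κ F) :
    ∃ (N : Matrix (Fin (Fintype.card ι - M.rank)) ι F)
      (D : Matrix ι (Fin (Fintype.card ι - M.rank)) F) (G : Matrix κ ι F),
      N * M = 0 ∧ N * D = 1 ∧ D * N + M * G = 1 := by
  classical
  let f := M.vecMulLinear
  obtain ⟨g, hg⟩ := exists_comp_comp_eq_self f
  let b := (Module.finBasisOfFinrankEq F (LinearMap.ker f) (finrank_ker_vecMulLinear M)).equivFun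
  let pr : (ι → F) →ₗ[F] LinearMap.ker f :=
    (LinearMap.id - g ∘ₗ f).codRestrict _ fun v => by
      simpa [sub_eq_zero] using (LinearMap.congr_fun hg v).symm
  let incl := (LinearMap.ker f).subtype ∘ₗ b.symm.toLinearMap
  let coord := b.toLinearMap ∘ₗ pr
  have hM : LinearMap.toMatrixRight' f = M := LinearMap.toMatrixRight'.apply_symm_apply M
  have h0 : f ∘ₗ incl = 0 := LinearMap.ext fun v => (b.symm v).2
  have h1 : coord ∘ₗ incl = LinearMap.id := LinearMap.ext fun v => by
    have hpr : pr (b.symm v) = b.symm v := Subtype.ext (by simp [pr])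
    simp [coord, incl, hpr]
  have h2 : incl ∘ₗ coord + g ∘ₗ f = LinearMap.id := LinearMap.ext fun v => by
    simp [coord, incl, pr]
  refine ⟨incl.toMatrixRight', coord.toMatrixRight', g.toMatrixRight', ?_, ?_, ?_⟩
  · simpa only [LinearMap.toMatrixRight'_comp, hM, map_zero] using
      congrArg LinearMap.toMatrixRight' h0
  · rw [← LinearMap.toMatrixRight'_comp, h1, LinearMap.toMatrixRight'_id]
  · simpa only [map_add, LinearMap.toMatrixRight'_comp, hM, LinearMap.toMatrixRight'_id] using
      congrArg LinearMap.toMatrixRight' h2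

theorem rank_lt_card_of_det_submatrix_eq_zero [Finite ι] [DecidableEq κ] (M : Matrix ι κ F)
    (h : ∀ f : κ → ι, (M.submatrix f id).det = 0) : M.rank < Fintype.card κ := by
  by_contra! hle
  obtain ⟨μ, a, ha, hspan, hli⟩ := exists_linearIndependent' F M.row
  have := Finite.of_injective a ha
  have := Fintype.ofFinite μ
  have hcard : Fintype.card κ = Fintype.card μ := by
    rw [← finrank_span_eq_card hli, hspan, ← M.rank_eq_finrank_span_row]
    exact hle.antisymm M.rank_le_card_width
  let e := Fintype.equivOfCardEq hcard
  have hrows : LinearIndependent F (M.submatrix (a ∘ e) id).row := hli.comp e e.injective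
  rw [Matrix.linearIndependent_rows_iff_isUnit, Matrix.isUnit_iff_isUnit_det] at hrows
  exact hrows.ne_zero (h _)

theorem rank_add_card_le_rank_submatrix_add_card {μ : Type*} [Fintype μ] (M : Matrix ι κ F)
    {c : μ → κ} (hc : Function.Injective c) :
    M.rank + Fintype.card μ ≤ (M.submatrix id c).rank + Fintype.card κ := by
  classical
  let U := Submodule.span F (Set.range (M.submatrix id c).col)
  let V := Submodule.span F (Set.range fun j : {j // j ∉ Set.range c} => M.col j)
  have : Module.Finite F U := .span_of_finite F (Set.finite_range _)
  have : Module.Finite F V := .span_of_finite F (Set.finite_range _)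
  have hspan : Submodule.span F (Set.range M.col) ≤ U ⊔ V := by
    rw [Submodule.span_le]
    rintro _ ⟨j, rfl⟩
    by_cases hj : j ∈ Set.range c
    · obtain ⟨i, rfl⟩ := hj
      exact Submodule.mem_sup_left (Submodule.subset_span ⟨i, rfl⟩)
    · exact Submodule.mem_sup_right (Submodule.subset_span ⟨⟨j, hj⟩, rfl⟩)
  have hV : Module.finrank F V ≤ Fintype.card κ - Fintype.card μ := by
    refine (finrank_range_le_card _).trans_eq ?_
    rw [Fintype.card_subtype_compl, ← Set.toFinset_card, Set.toFinset_range,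
      Finset.card_image_of_injective _ hc, Finset.card_univ]
  have hle := Fintype.card_le_of_injective c hc
  have h1 := Submodule.finrank_mono hspan
  have h2 := Submodule.finrank_add_le_finrank_add_finrank U V
  rw [← M.rank_eq_finrank_span_cols] at h1
  rw [show Module.finrank F U = _ from (M.submatrix id c).rank_eq_finrank_span_cols.symm] at h2
  omega

theorem rank_map_fractionRing_eq_card [Finite ι] {R : Type*} [CommRing R] [Algebra R F]
    [IsFractionRing R F] {M : Matrix ι κ R} (hM : Function.Injective M.mulVecLin) :
    (M.map (algebraMap R F)).rank = Fintype.card κ := by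
  have hcols : LinearIndependent R M.col := Matrix.mulVec_injective_iff.1 hM
  have hcols' := hcols.of_isLocalizedModule F (nonZeroDivisors R)
    (LinearMap.pi fun i => Algebra.linearMap R F ∘ₗ LinearMap.proj i)
  rw [Matrix.rank_eq_finrank_span_cols]
  exact finrank_span_eq_card hcols'

end MatrixRank

section LinearFibre

open Matrix

variable {F ι κ : Type*} [Field F]

theorem adjoin_range_vecMul_le {ρ A : Type*} [Fintype ρ] [CommRing A] [Algebra F A]
    (N : Matrix ρ ι F) (b : ρ → A) :
    Algebra.adjoin F (Set.range (b ᵥ* N.map (algebraMap F A))) ≤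
      Algebra.adjoin F (Set.range b) := by
  rw [Algebra.adjoin_le_iff]
  rintro _ ⟨i, rfl⟩
  exact sum_mem fun s _ => mul_mem (Algebra.subset_adjoin ⟨s, rfl⟩) (Subalgebra.algebraMap_mem _ _)

theorem isAlgebraic_adjoin_range_of_vecMul_eq {ρ L : Type*} [Fintype ρ]
    [Field L] [Algebra F L] {y : ι → L} {N : Matrix ρ ι F} {b : ρ → L}
    [Algebra.IsAlgebraic (Algebra.adjoin F (Set.range y)) L]
    (h : b ᵥ* N.map (algebraMap F L) = y) :
    Algebra.IsAlgebraic (Algebra.adjoin F (Set.range b)) L :=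
  ⟨fun a => (Algebra.IsAlgebraic.isAlgebraic a).tower_top_of_subalgebra_le
    (h ▸ adjoin_range_vecMul_le N b)⟩

theorem aeval_vecMul_map {ρ A : Type*} [Fintype ρ] [CommRing A] [Algebra F A]
    (N : Matrix ρ ι F) (b : ρ → A) (f : MvPolynomial ι F) :
    aeval (b ᵥ* N.map (algebraMap F A)) f = aeval b (aeval (X ᵥ* N.map C) f) := by
  rw [comp_aeval_apply]
  congr 2
  ext i
  simp [vecMul, dotProduct]

variable [Fintype ι] [Fintype κ]

theorem vecMul_map_vecMul_map_eq_self [DecidableEq ι] {ρ A : Type*} [Fintype ρ]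
    [CommRing A] [Algebra F A] {M : Matrix ι κ F} {N : Matrix ρ ι F} {D : Matrix ι ρ F}
    {G : Matrix κ ι F} (h : D * N + M * G = 1) {y : ι → A}
    (hy : y ᵥ* M.map (algebraMap F A) = 0) :
    (y ᵥ* D.map (algebraMap F A)) ᵥ* N.map (algebraMap F A) = y := by
  have h' := congrArg (fun Q => y ᵥ* Q.map (algebraMap F A)) h
  simpa [Matrix.map_add, Matrix.map_mul, vecMul_add, ← vecMul_vecMul, hy] using h'

variable {L : Type*} [Field L] [Algebra F L] {M : Matrix ι κ F} {y : ι → L}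

theorem trdeg_le_card_sub_rank [Algebra.IsAlgebraic (Algebra.adjoin F (Set.range y)) L]
    (hy : y ᵥ* M.map (algebraMap F L) = 0) :
    Algebra.trdeg F L ≤ (Fintype.card ι - M.rank : ℕ) := by
  classical
  obtain ⟨N, D, G, -, -, h⟩ := exists_leftKernel_splitting M
  have := isAlgebraic_adjoin_range_of_vecMul_eq (vecMul_map_vecMul_map_eq_self h hy)
  have hle := Algebra.IsAlgebraic.trdeg_le_cardinalMk F (Set.range (y ᵥ* D.map (algebraMap F L)))
  exact hle.trans (by simpa using Cardinal.mk_range_le_lift (f := y ᵥ* D.map (algebraMap F L)))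

theorem aeval_eq_zero_of_card_sub_rank_le_trdeg
    [Algebra.IsAlgebraic (Algebra.adjoin F (Set.range y)) L]
    (hy : y ᵥ* M.map (algebraMap F L) = 0)
    (hrank : (Fintype.card ι - M.rank : ℕ) ≤ Algebra.trdeg F L)
    {A : Type*} [CommRing A] [Algebra F A] {z : ι → A} (hz : z ᵥ* M.map (algebraMap F A) = 0)
    {f : MvPolynomial ι F} (hf : aeval y f = 0) : aeval z f = 0 := by
  classical
  obtain ⟨N, D, G, -, -, h⟩ := exists_leftKernel_splitting M
  have hyN := vecMul_map_vecMul_map_eq_self h hy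
  have hzN := vecMul_map_vecMul_map_eq_self h hz
  have := isAlgebraic_adjoin_range_of_vecMul_eq hyN
  have hb : AlgebraicIndependent F (y ᵥ* D.map (algebraMap F L)) :=
    (Algebra.IsAlgebraic.isTranscendenceBasis_of_lift_le_trdeg_of_finite F _
      (by simpa using hrank)).1
  have hzero : aeval (X ᵥ* N.map C) f = 0 :=
    hb (by rw [← aeval_vecMul_map, hyN, hf, map_zero])
  rw [← hzN, aeval_vecMul_map, hzero, map_zero]

end LinearFibre

section RankAt

open Matrix

/-- The rank of `M` at the point `p`, that is, over the residue field of `p`. -/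
def rankAt {R ι κ : Type*} [CommRing R] [Fintype κ] (M : Matrix ι κ R) (p : Ideal R)
    [p.IsPrime] : ℕ :=
  (M.map (algebraMap R p.ResidueField)).rank

theorem rankAt_lt_card_of_det_submatrix_mem {R ι κ : Type*} [CommRing R] [Finite ι] [Fintype κ]
    [DecidableEq κ] {M : Matrix ι κ R} {p : Ideal R} [p.IsPrime]
    (h : ∀ f : κ → ι, (M.submatrix f id).det ∈ p) : rankAt M p < Fintype.card κ := by
  refine rank_lt_card_of_det_submatrix_eq_zero _ fun f => ?_
  rw [submatrix_map, ← RingHom.mapMatrix_apply, ← RingHom.map_det,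
    Ideal.algebraMap_residueField_eq_zero]
  exact h f

theorem rankAt_bot {R ι κ : Type*} [CommRing R] [IsDomain R] [Finite ι] [Fintype κ]
    {φ : Matrix ι κ R} (hφ : Function.Injective φ.mulVecLin) :
    rankAt φ ⊥ = Fintype.card κ := by
  have : IsFractionRing R (⊥ : Ideal R).ResidueField :=
    IsFractionRing.of_ringEquiv_left (RingEquiv.quotientBot R).symm fun _ => rfl
  exact rank_map_fractionRing_eq_card hφ

theorem card_le_rankAt_submatrix_bot {R ι κ μ : Type*} [CommRing R] [IsDomain R]
    [Finite ι] [Fintype κ] [Fintype μ] {φ : Matrix ι κ R}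
    (hφ : Function.Injective φ.mulVecLin) {c : μ → κ} (hc : Function.Injective c) :
    Fintype.card μ ≤ rankAt (φ.submatrix id c) ⊥ := by
  have hsub : rankAt φ ⊥ + Fintype.card μ ≤ rankAt (φ.submatrix id c) ⊥ + Fintype.card κ :=
    rank_add_card_le_rank_submatrix_add_card _ hc
  rw [rankAt_bot hφ] at hsub
  omega

end RankAt

section PrimeFibre

open Matrix Localization.AtPrime

variable {R A ι κ : Type*} [CommRing R] [CommRing A] [Algebra R A]

theorem isAlgebraic_adjoin_residueField {y : ι → A} (hy : Algebra.adjoin R (Set.range y) = ⊤)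
    (p : Ideal R) [p.IsPrime] (P : Ideal A) [P.IsPrime] [P.LiesOver p]
    [Algebra (Localization.AtPrime p) (Localization.AtPrime P)]
    [IsLiesOverAlgebra p P] :
    Algebra.IsAlgebraic
      (Algebra.adjoin p.ResidueField (Set.range (algebraMap A P.ResidueField ∘ y)))
      P.ResidueField := by
  let S := Algebra.adjoin p.ResidueField (Set.range (algebraMap A P.ResidueField ∘ y))
  have hS (b : A) : algebraMap A P.ResidueField b ∈ S := by
    have hb : b ∈ Algebra.adjoin R (Set.range y) := hy ▸ Algebra.mem_top
    induction hb using Algebra.adjoin_induction with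
    | mem x hx =>
      obtain ⟨i, rfl⟩ := hx
      exact Algebra.subset_adjoin ⟨i, rfl⟩
    | algebraMap r =>
      rw [← IsScalarTower.algebraMap_apply R A,
        IsScalarTower.algebraMap_apply R p.ResidueField]
      exact S.algebraMap_mem _
    | add x y _ _ hx hy => exact map_add (algebraMap A P.ResidueField) x y ▸ add_mem hx hy
    | mul x y _ _ hx hy => exact map_mul (algebraMap A P.ResidueField) x y ▸ mul_mem hx hy
  have halg (b : A ⧸ P) : IsAlgebraic S (algebraMap (A ⧸ P) P.ResidueField b) := by
    obtain ⟨b, rfl⟩ := Ideal.Quotient.mk_surjective b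
    exact isAlgebraic_algebraMap (⟨_, hS b⟩ : S)
  refine ⟨fun x => ?_⟩
  obtain ⟨a, b, -, rfl⟩ := IsFractionRing.div_surjective (A := A ⧸ P) x
  exact div_eq_mul_inv (algebraMap (A ⧸ P) P.ResidueField a) _ ▸ (halg a).mul (halg b).inv

variable [Fintype ι] {M : Matrix ι κ R} {y : ι → A}

theorem vecMul_residueField_eq_zero_iff {p : Ideal R} [p.IsPrime] {P : Ideal A} [P.IsPrime]
    [P.LiesOver p] [Algebra (Localization.AtPrime p) (Localization.AtPrime P)]
    [IsLiesOverAlgebra p P] :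
    (algebraMap A P.ResidueField ∘ y) ᵥ*
        (M.map (algebraMap R p.ResidueField)).map (algebraMap p.ResidueField P.ResidueField) = 0 ↔
      ∀ j, (y ᵥ* M.map (algebraMap R A)) j ∈ P := by
  rw [funext_iff]
  refine forall_congr' fun j => ?_
  rw [Pi.zero_apply, ← Ideal.algebraMap_residueField_eq_zero]
  simp [vecMul, dotProduct, ← IsScalarTower.algebraMap_apply]

variable [Fintype κ] (hgen : Algebra.adjoin R (Set.range y) = ⊤) {p : Ideal R} [p.IsPrime]
include hgen

theorem trdeg_residueField_le_card_sub_rankAt {P : Ideal A} [P.IsPrime] [P.LiesOver p]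
    [Algebra (Localization.AtPrime p) (Localization.AtPrime P)] [IsLiesOverAlgebra p P]
    (hP : ∀ j, (y ᵥ* M.map (algebraMap R A)) j ∈ P) :
    Algebra.trdeg p.ResidueField P.ResidueField ≤ (Fintype.card ι - rankAt M p : ℕ) :=
  have := isAlgebraic_adjoin_residueField hgen p P
  trdeg_le_card_sub_rank (vecMul_residueField_eq_zero_iff.2 hP)

theorem le_of_card_sub_rankAt_le_trdeg {P P' : Ideal A} [P.IsPrime] [P'.IsPrime] [P.LiesOver p]
    [P'.LiesOver p] [Algebra (Localization.AtPrime p) (Localization.AtPrime P)]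
    [IsLiesOverAlgebra p P]
    (hP : ∀ j, (y ᵥ* M.map (algebraMap R A)) j ∈ P)
    (hP' : ∀ j, (y ᵥ* M.map (algebraMap R A)) j ∈ P')
    (hrank : (Fintype.card ι - rankAt M p : ℕ) ≤ Algebra.trdeg p.ResidueField P.ResidueField) :
    P ≤ P' := by
  let := algebraOfLiesOver p P'
  have := isAlgebraic_adjoin_residueField hgen p P
  intro f hf
  obtain ⟨g, rfl⟩ : f ∈ (aeval (R := R) y).range := by
    rw [← Algebra.adjoin_range_eq_range_aeval, hgen]
    exact Algebra.mem_top
  have haeval (Q : Ideal A) [Q.IsPrime] [Q.LiesOver p]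
      [Algebra (Localization.AtPrime p) (Localization.AtPrime Q)] [IsLiesOverAlgebra p Q] :
      aeval y g ∈ Q ↔
        aeval (algebraMap A Q.ResidueField ∘ y) (map (algebraMap R p.ResidueField) g) = 0 := by
    rw [← Ideal.algebraMap_residueField_eq_zero, aeval_map_algebraMap, ← aeval_algebraMap_apply]
  refine (haeval P').2 (aeval_eq_zero_of_card_sub_rank_le_trdeg
    (vecMul_residueField_eq_zero_iff.2 hP) hrank (vecMul_residueField_eq_zero_iff.2 hP') ?_)
  exact (haeval P).1 hf

end PrimeFibre

section GenericPoint

open Matrix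

variable {R δ : Type v} [CommRing R] [Fintype δ] (q : Ideal R) [q.IsPrime]

theorem isAlgebraic_range_aeval_vecMul {ρ : Type*} [Fintype ρ] [DecidableEq ρ]
    {N : Matrix ρ δ q.ResidueField} {D : Matrix δ ρ q.ResidueField} (h : N * D = 1) :
    Algebra.IsAlgebraic (aeval (R := R) (X ᵥ* N.map C)).range (MvPolynomial ρ q.ResidueField) := by
  let S := (aeval (R := R) (X ᵥ* N.map (C (σ := ρ)))).range
  have hR (t : R) : IsAlgebraic S (C (σ := ρ) (algebraMap R q.ResidueField t)) :=
    isAlgebraic_algebraMap (algebraMap R S t)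
  have hC (c : q.ResidueField) : IsAlgebraic S (C (σ := ρ) c) := by
    obtain ⟨a, b, hb, rfl⟩ := IsFractionRing.div_surjective (A := R ⧸ q) c
    obtain ⟨a, rfl⟩ := Ideal.Quotient.mk_surjective a
    obtain ⟨b, rfl⟩ := Ideal.Quotient.mk_surjective b
    have hb0 : algebraMap R q.ResidueField b ≠ 0 := by
      rw [Ne, Ideal.algebraMap_residueField_eq_zero, ← Ideal.Quotient.eq_zero_iff_mem]
      exact nonZeroDivisors.ne_zero hb
    refine (hR b).of_mul (mem_nonZeroDivisors_of_ne_zero (C_ne_zero.2 hb0)) ?_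
    have hab : algebraMap R q.ResidueField b * (algebraMap (R ⧸ q) q.ResidueField
        (Ideal.Quotient.mk q a) / algebraMap (R ⧸ q) q.ResidueField (Ideal.Quotient.mk q b)) =
          algebraMap R q.ResidueField a := mul_div_cancel₀ _ hb0
    rw [← C_mul, hab]
    exact hR a
  have hXN : (X ᵥ* N.map C) ᵥ* D.map C = (X : ρ → MvPolynomial ρ q.ResidueField) := by
    rw [vecMul_vecMul, ← Matrix.map_mul, h, Matrix.map_one _ C_0 C_1, vecMul_one]
  have hX (s : ρ) : IsAlgebraic S (X s : MvPolynomial ρ q.ResidueField) := by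
    rw [← hXN]
    refine (Subalgebra.algebraicClosure S _).sum_mem fun t _ => mul_mem ?_ (hC _)
    exact isAlgebraic_algebraMap (⟨_, X t, aeval_X _ _⟩ : S)
  refine ⟨fun f => ?_⟩
  induction f using MvPolynomial.induction_on with
  | C c => exact hC c
  | add f g hf hg => exact hf.add hg
  | mul_X f s hf => exact hf.mul (hX s)

theorem trdeg_quotient_ker_aeval_vecMul (k : Type*) [Field k] [Algebra k R] {r : ℕ}
    {N : Matrix (Fin r) δ q.ResidueField} {D : Matrix δ (Fin r) q.ResidueField} (h : N * D = 1) :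
    Algebra.trdeg k (MvPolynomial δ R ⧸ RingHom.ker (aeval (R := R) (X ᵥ* N.map C))) =
      Algebra.trdeg k q.ResidueField + r := by
  let ψ := aeval (R := R) (X ᵥ* N.map C)
  have : Algebra.IsAlgebraic ψ.range (MvPolynomial (Fin r) q.ResidueField) :=
    isAlgebraic_range_aeval_vecMul q h
  calc Algebra.trdeg k (MvPolynomial δ R ⧸ RingHom.ker ψ)
      = Algebra.trdeg k ψ.range :=
        ((Ideal.quotientKerEquivRange ψ).restrictScalars k).trdeg_eq
    _ = Algebra.trdeg k (MvPolynomial (Fin r) q.ResidueField) := by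
        rw [← trdeg_add_eq k ψ.range (A := MvPolynomial (Fin r) _), trdeg_eq_zero (R := ψ.range),
          add_zero]
    _ = Algebra.trdeg k q.ResidueField + r := by
        rw [← trdeg_add_eq k q.ResidueField (A := MvPolynomial (Fin r) _), trdeg_of_isDomain,
          Cardinal.mk_fin, Cardinal.lift_natCast]

theorem exists_prime_liesOver_trdeg_residueField_eq (k : Type*) [Field k] [Algebra k R]
    {κ : Type*} [Fintype κ] (σ : Matrix δ κ R) :
    ∃ (P : Ideal (MvPolynomial δ R)) (_ : P.IsPrime), P.LiesOver q ∧
      (∀ j, (X ᵥ* σ.map C) j ∈ P) ∧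
      Algebra.trdeg k P.ResidueField =
        Algebra.trdeg k q.ResidueField + (Fintype.card δ - rankAt σ q : ℕ) := by
  classical
  let σq := σ.map (algebraMap R q.ResidueField)
  obtain ⟨N, D, -, hNσ, hND, -⟩ := exists_leftKernel_splitting σq
  let ψ := aeval (R := R) (X ᵥ* N.map C)
  refine ⟨RingHom.ker ψ, RingHom.ker_isPrime ψ, ⟨?_⟩, fun j => ?_, ?_⟩
  · ext t
    simp [Ideal.under, ψ, RingHom.mem_ker, MvPolynomial.algebraMap_eq]
  · have hψ : ψ ((X ᵥ* σ.map C) j) = ((X ᵥ* N.map C) ᵥ* σq.map C) j := by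
      simp [ψ, σq, vecMul, dotProduct]
    rw [RingHom.mem_ker, hψ, vecMul_vecMul, ← Matrix.map_mul, hNσ]
    simp
  · have : (RingHom.ker ψ).IsPrime := RingHom.ker_isPrime ψ
    exact (trdeg_residueField k (RingHom.ker ψ)).trans (trdeg_quotient_ker_aeval_vecMul q k hND)

end GenericPoint

section Generators

open Matrix

theorem finrank_le_card_of_span_localization_eq_top {R S K E E' V : Type*} [CommRing R]
    (m : Submonoid R) [CommRing S] [Algebra R S] [IsLocalization m S]
    [CommRing K] [Nontrivial K] [Algebra S K] [AddCommGroup E] [Module R E] [AddCommGroup E']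
    [Module R E'] [Module S E'] [IsScalarTower R S E'] (mk : E →ₗ[R] E') [IsLocalizedModule m mk]
    [AddCommGroup V] [Module R V] [Module S V] [Module K V] [IsScalarTower R S V]
    [IsScalarTower S K V] (g : E →ₗ[R] V) (hg : Submodule.span K (Set.range g) = ⊤)
    {s : Finset E'} (hs : Submodule.span S (s : Set E') = ⊤) :
    Module.finrank K V ≤ s.card := by
  have hunit (x : m) : IsUnit (algebraMap R (Module.End R V) x) :=
    (Algebra.lsmul R R V).commutes (A := S) (x : R) ▸
      (IsLocalization.map_units S x).map (Algebra.lsmul R R V)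
  let g' := (IsLocalizedModule.lift m mk g hunit).extendScalarsOfIsLocalization m S
  have hspan : Submodule.span K (Set.range fun x : s => g' x) = ⊤ := by
    rw [eq_top_iff, ← hg, Submodule.span_le]
    rintro _ ⟨x, rfl⟩
    have hx : g' (mk x) ∈ Submodule.span S (g' '' s) :=
      Submodule.apply_mem_span_image_of_mem_span g' (hs ▸ Submodule.mem_top)
    have hgx : g' (mk x) = g x := IsLocalizedModule.lift_apply m mk g hunit x
    rw [hgx, Set.image_eq_range] at hx
    exact Submodule.span_le_restrictScalars S K _ hx
  exact (finrank_le_of_span_eq_top hspan).trans_eq (Fintype.card_coe s)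

theorem span_range_mulVec_algebraMap_eq_top {R S ι ρ : Type*} [CommRing R] [CommRing S]
    [Algebra R S] [Fintype ι] [Finite ρ] [DecidableEq ρ] {N : Matrix ρ ι S} {D : Matrix ι ρ S}
    (h : N * D = 1) :
    Submodule.span S (Set.range fun v : ι → R => N *ᵥ (algebraMap R S ∘ v)) = ⊤ := by
  classical
  have := Fintype.ofFinite ρ
  refine eq_top_iff.2 fun w _ => ?_
  have hw : N *ᵥ (D *ᵥ w) = w := by rw [mulVec_mulVec, h, one_mulVec]
  rw [← hw, mulVec_eq_sum]
  simp only [op_smul_eq_smul]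
  refine Submodule.sum_mem _ fun i _ => Submodule.smul_mem _ _ (Submodule.subset_span ?_)
  have hi : algebraMap R S ∘ Pi.single i 1 = Pi.single i 1 :=
    funext fun j => by by_cases hj : j = i <;> simp [hj]
  exact ⟨Pi.single i 1, by simp only [hi, mulVec_single_one, col_def]⟩

theorem card_le_card_add_rankAt {R E ι κ : Type*} [CommRing R] [AddCommGroup E] [Module R E]
    [Fintype ι] [Fintype κ] {φ : Matrix ι κ R} {π : (ι → R) →ₗ[R] E} (hπ : Function.Surjective π)
    (hφ : LinearMap.ker π ≤ LinearMap.range φ.mulVecLin) {p : Ideal R} [p.IsPrime]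
    {s : Finset (LocalizedModule p.primeCompl E)}
    (hs : Submodule.span (Localization.AtPrime p) (s : Set (LocalizedModule p.primeCompl E)) = ⊤) :
    Fintype.card ι ≤ s.card + rankAt φ p := by
  classical
  obtain ⟨N, D, -, hNφ, hND, -⟩ :=
    exists_leftKernel_splitting (φ.map (algebraMap R p.ResidueField))
  let f := N.mulVecLin.restrictScalars R ∘ₗ (Algebra.linearMap R p.ResidueField).compLeft ι
  have hf : LinearMap.ker π ≤ LinearMap.ker f := hφ.trans <| by
    rintro _ ⟨v, rfl⟩
    change N *ᵥ (algebraMap R p.ResidueField ∘ (φ *ᵥ v)) = 0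
    have hv : algebraMap R p.ResidueField ∘ (φ *ᵥ v) =
        φ.map (algebraMap R p.ResidueField) *ᵥ (algebraMap R p.ResidueField ∘ v) :=
      funext fun i => RingHom.map_mulVec _ φ v i
    rw [hv, mulVec_mulVec, hNφ, zero_mulVec]
  let g := (LinearMap.ker π).liftQ f hf ∘ₗ (π.quotKerEquivOfSurjective hπ).symm.toLinearMap
  have hgπ (v : ι → R) : g (π v) = f v := by
    have hv : (π.quotKerEquivOfSurjective hπ).symm (π v) = (LinearMap.ker π).mkQ v :=
      (LinearEquiv.symm_apply_eq _).2 rfl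
    simp [g, hv]
  have hg : Submodule.span p.ResidueField (Set.range g) = ⊤ := by
    rw [← hπ.range_comp, show g ∘ π = f from funext hgπ]
    exact span_range_mulVec_algebraMap_eq_top hND
  have hle := finrank_le_card_of_span_localization_eq_top p.primeCompl
    (LocalizedModule.mkLinearMap p.primeCompl E) g hg hs
  rw [Module.finrank_fin_fun] at hle
  exact Nat.sub_le_iff_le_add.1 hle

end Generators

section JacobianDual

open Matrix

attribute [local instance] algebraMvPolynomial

theorem adjoin_range_C_comp_X (k δ ι : Type*) [CommRing k] :
    Algebra.adjoin (MvPolynomial δ k)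
      (Set.range (C ∘ X : ι → MvPolynomial δ (MvPolynomial ι k))) = ⊤ := by
  let S := Algebra.adjoin (MvPolynomial δ k)
    (Set.range (C ∘ X : ι → MvPolynomial δ (MvPolynomial ι k)))
  refine Algebra.eq_top_iff.2 fun f => ?_
  induction f using MvPolynomial.induction_on with
  | C g =>
    induction g using MvPolynomial.induction_on with
    | C a => simpa using S.algebraMap_mem (C a)
    | add f g hf hg => exact C_add (σ := δ) (a := f) ▸ add_mem hf hg
    | mul_X f i hf => exact C_mul (σ := δ) (a := f) ▸ mul_mem hf (Algebra.subset_adjoin ⟨i, rfl⟩)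
  | add f g hf hg => exact add_mem hf hg
  | mul_X f t hf => exact mul_mem hf (by simpa using S.algebraMap_mem (X t))

/-- The ideal of `k[y][x]` generated by the entries of `[y]·M`; its quotient is the symmetric
algebra of `coker M`. -/
def symmetricIdeal {k δ ι κ : Type*} [CommRing k] [Fintype ι]
    (M : Matrix ι κ (MvPolynomial δ k)) :
    Ideal (MvPolynomial δ (MvPolynomial ι k)) :=
  Ideal.span (Set.range ((C ∘ X) ᵥ* M.map (map C)))

/-- `σ` is the Jacobian dual `B(M)`, i.e. `[y]·M = [x]·σ` in `k[y][x]`, where the entries of `M`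
are polynomials in `x` and those of `σ` are polynomials in `y`. -/
def IsJacobianDual {k δ ι κ : Type*} [CommRing k] [Fintype δ] [Fintype ι]
    (M : Matrix ι κ (MvPolynomial δ k)) (σ : Matrix δ κ (MvPolynomial ι k)) : Prop :=
  (C ∘ X) ᵥ* M.map (map C) = X ᵥ* σ.map C

theorem isJacobianDual_of_rename {k δ ι κ : Type*} [CommRing k] [Fintype δ] [Fintype ι]
    {M : Matrix ι κ (MvPolynomial δ k)} {σ : Matrix δ κ (MvPolynomial ι k)}
    (h : ∀ j, ∑ i, rename Sum.inl (M i j) * X (Sum.inr i) =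
      ∑ t, X (Sum.inl t) * (rename Sum.inr (σ t j) : MvPolynomial (δ ⊕ ι) k)) :
    IsJacobianDual M σ := by
  have hinl (f : MvPolynomial δ k) : sumAlgEquiv k δ ι (rename Sum.inl f) = map C f :=
    DFunLike.congr_fun (sumAlgEquiv_comp_rename_inl k δ ι) f
  have hinr (f : MvPolynomial ι k) : sumAlgEquiv k δ ι (rename Sum.inr f) = C f :=
    DFunLike.congr_fun (sumAlgEquiv_comp_rename_inr k δ ι) f
  ext1 j
  have hj := congrArg (sumAlgEquiv k δ ι) (h j)
  simp only [map_sum, map_mul, hinl, hinr, sumAlgEquiv_X_inl, sumAlgEquiv_X_inr] at hj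
  simpa only [vecMul, dotProduct, map_apply, Function.comp_apply, mul_comm] using hj

variable {k δ ι : Type v} {κ : Type*} [Field k] [Fintype δ] [Fintype ι] [Fintype κ]
  {M : Matrix ι κ (MvPolynomial δ k)} {σ : Matrix δ κ (MvPolynomial ι k)}

theorem liesOver_bot_of_card_le_trdeg
    (hM : ∀ (p : Ideal (MvPolynomial δ k)) [p.IsPrime], p ≠ ⊥ →
      (Fintype.card κ : ℕ∞) < rankAt M p + p.height)
    {P : Ideal (MvPolynomial δ (MvPolynomial ι k))} [P.IsPrime]
    (hP : symmetricIdeal M ≤ P)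
    (htr : (Fintype.card δ + Fintype.card ι : Cardinal) ≤
      Algebra.trdeg k P.ResidueField + Fintype.card κ) :
    P.LiesOver (⊥ : Ideal (MvPolynomial δ k)) := by
  refine ⟨(not_not.1 fun hp => ?_ : P.under (MvPolynomial δ k) = ⊥).symm⟩
  let p := P.under (MvPolynomial δ k)
  let := Localization.AtPrime.algebraOfLiesOver p P
  obtain ⟨h, t, hh, ht, hle⟩ := exists_height_eq_trdeg_residueField_eq p
  have hfib := trdeg_residueField_le_card_sub_rankAt (adjoin_range_C_comp_X k δ ι) (p := p)
    fun j => hP (Ideal.subset_span ⟨j, rfl⟩)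
  rw [← trdeg_residueField_add_trdeg_residueField k p P, ht] at htr
  have hle' := htr.trans (add_le_add_left (add_le_add_right hfib _) _)
  have hlt := hM p hp
  rw [hh] at hlt
  have hrank : rankAt M p ≤ Fintype.card ι := rank_le_card_height _
  norm_cast at hle' hlt
  omega

theorem le_of_card_le_trdeg {p : Ideal (MvPolynomial δ k)} [p.IsPrime]
    (hrank : Fintype.card κ ≤ rankAt M p)
    {P P' : Ideal (MvPolynomial δ (MvPolynomial ι k))} [P.IsPrime] [P'.IsPrime] [P.LiesOver p]
    [P'.LiesOver p] (hP : symmetricIdeal M ≤ P) (hP' : symmetricIdeal M ≤ P')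
    (htr : (Fintype.card δ + Fintype.card ι : Cardinal) ≤
      Algebra.trdeg k P.ResidueField + Fintype.card κ) :
    P ≤ P' := by
  let := Localization.AtPrime.algebraOfLiesOver p P
  obtain ⟨h, t, -, ht, hle⟩ := exists_height_eq_trdeg_residueField_eq p
  refine le_of_card_sub_rankAt_le_trdeg (adjoin_range_C_comp_X k δ ι) (p := p)
    (fun j => hP (Ideal.subset_span ⟨j, rfl⟩)) (fun j => hP' (Ideal.subset_span ⟨j, rfl⟩)) ?_
  by_contra! hlt
  obtain ⟨s, hs⟩ := Cardinal.lt_aleph0.1 (hlt.trans Cardinal.natCast_lt_aleph0)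
  rw [← trdeg_residueField_add_trdeg_residueField k p P, ht, hs] at htr
  rw [hs] at hlt
  norm_cast at htr hlt
  omega

theorem exists_prime_liesOver_card_le_trdeg (h : IsJacobianDual M σ) {q : Ideal (MvPolynomial ι k)}
    [q.IsPrime] {c : ℕ} (hrank : rankAt σ q + c ≤ Fintype.card κ)
    (htr : (Fintype.card ι : Cardinal) ≤ Algebra.trdeg k q.ResidueField + c) :
    ∃ (P : Ideal (MvPolynomial δ (MvPolynomial ι k))) (_ : P.IsPrime), P.LiesOver q ∧
      symmetricIdeal M ≤ P ∧
      (Fintype.card δ + Fintype.card ι : Cardinal) ≤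
        Algebra.trdeg k P.ResidueField + Fintype.card κ := by
  obtain ⟨P, hprime, hover, hP, htrP⟩ := exists_prime_liesOver_trdeg_residueField_eq q k σ
  refine ⟨P, hprime, hover, ?_, ?_⟩
  · rw [symmetricIdeal, h, Ideal.span_le]
    rintro _ ⟨j, rfl⟩
    exact hP j
  · obtain ⟨-, t, -, ht, -⟩ := exists_height_eq_trdeg_residueField_eq q
    rw [ht] at htr htrP
    rw [htrP]
    norm_cast at htr ⊢
    omega

theorem two_le_height_of_isJacobianDual [DecidableEq κ]
    (hM : ∀ (p : Ideal (MvPolynomial δ k)) [p.IsPrime], p ≠ ⊥ →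
      (Fintype.card κ : ℕ∞) < rankAt M p + p.height)
    (hbot : Fintype.card κ ≤ rankAt M ⊥) (h : IsJacobianDual M σ)
    {p : Ideal (MvPolynomial ι k)} [p.IsPrime] (hp : ∀ c : κ → δ, (σ.submatrix c id).det ∈ p) :
    2 ≤ p.height := by
  by_contra! hlt
  have hcard : 0 < Fintype.card ι :=
    (Nat.zero_le _).trans_lt ((rankAt_lt_card_of_det_submatrix_mem hp).trans_le
      (hbot.trans (rank_le_card_height _)))
  have := Fintype.card_pos_iff.1 hcard
  obtain ⟨f, hf, hpf⟩ := exists_prime_le_span_singleton_of_height_lt_two p hlt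
  have hfprime : (Ideal.span {f}).IsPrime := (Ideal.span_singleton_prime hf.ne_zero).2 hf
  obtain ⟨P, _, _, hP, htrP⟩ := exists_prime_liesOver_card_le_trdeg h (q := Ideal.span {f}) (c := 1)
    (rankAt_lt_card_of_det_submatrix_mem fun c => hpf (hp c))
    (by simpa [trdeg_residueField] using card_le_trdeg_quotient_span_singleton_add_one hf)
  obtain ⟨P', _, _, hP', htrP'⟩ := exists_prime_liesOver_card_le_trdeg h (q := ⊥) (c := 0)
    (rank_le_card_width _) (by
      rw [trdeg_residueField, (AlgEquiv.quotientBot k (MvPolynomial ι k)).trdeg_eq,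
        trdeg_of_isDomain]; simp)
  have := liesOver_bot_of_card_le_trdeg hM hP htrP
  have := liesOver_bot_of_card_le_trdeg hM hP' htrP'
  have hPP' : P ≤ P' := le_of_card_le_trdeg hbot hP hP' htrP
  have hfP : C f ∈ P :=
    (Ideal.mem_of_liesOver P (Ideal.span {f}) f).1 (Ideal.mem_span_singleton_self f)
  exact hf.ne_zero ((Ideal.mem_of_liesOver P' ⊥ f).2 (hPP' hfP))

end JacobianDual

section ConditionG

/-- The condition `G_s` on a module of rank `e`: `μ(E_p) ≤ dim R_p + e - 1` whenever
`1 ≤ dim R_p ≤ s - 1`. The bounds are stated with `+ 1` and `<`, avoiding truncated subtraction. -/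
def SatisfiesG (R E : Type*) [CommRing R] [AddCommGroup E] [Module R E] (e s : ℕ) : Prop :=
  ∀ (p : Ideal R) [p.IsPrime], 1 ≤ p.height → p.height < s →
    ∃ gens : Finset (LocalizedModule p.primeCompl E), (gens.card + 1 : ℕ∞) ≤ p.height + e ∧
      Submodule.span (Localization.AtPrime p) (gens : Set (LocalizedModule p.primeCompl E)) = ⊤

theorem SatisfiesG.mono {R E : Type*} [CommRing R] [AddCommGroup E] [Module R E] {e s t : ℕ}
    (h : SatisfiesG R E e t) (hst : s ≤ t) : SatisfiesG R E e s :=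
  fun p _ h1 hs => h p h1 (hs.trans_le (Nat.cast_le.2 hst))

theorem satisfiesG_of_ringKrullDim {R E : Type*} [CommRing R] [AddCommGroup E] [Module R E]
    {e s : ℕ}
    (h : ∀ (p : Ideal R) (_ : p.IsPrime) (c : ℕ),
      ringKrullDim (Localization.AtPrime p) = (c : WithBot ℕ∞) → 1 ≤ c → c ≤ s - 1 →
      ∃ gens : Finset (LocalizedModule p.primeCompl E), gens.card ≤ c + e - 1 ∧
        Submodule.span (Localization.AtPrime p)
          (gens : Set (LocalizedModule p.primeCompl E)) = ⊤) :
    SatisfiesG R E e s := by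
  intro p hp h1 hs
  obtain ⟨c, hc⟩ := ENat.ne_top_iff_exists.1 hs.ne_top
  rw [← hc] at h1 hs ⊢
  norm_cast at h1 hs
  obtain ⟨gens, hgens, hspan⟩ := h p hp c
    (by rw [IsLocalization.AtPrime.ringKrullDim_eq_height p, ← hc]; rfl) h1 (by omega)
  exact ⟨gens, by norm_cast; omega, hspan⟩

theorem card_lt_rankAt_submatrix_add_height {R E ι κ μ : Type*} [CommRing R] [IsDomain R]
    [AddCommGroup E] [Module R E] [Fintype ι] [Fintype κ] [Fintype μ] {e : ℕ}
    {φ : Matrix ι κ R} (hcard : Fintype.card ι = Fintype.card κ + e) {π : (ι → R) →ₗ[R] E}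
    (hπ : Function.Surjective π) (hφ : Function.Exact φ.mulVecLin π)
    (hG : SatisfiesG R E e (Fintype.card μ + 1)) {c : μ → κ} (hc : Function.Injective c)
    {p : Ideal R} [p.IsPrime] (hp : p ≠ ⊥) :
    (Fintype.card μ : ℕ∞) < rankAt (φ.submatrix id c) p + p.height := by
  obtain hlt | hle := lt_or_ge (Fintype.card μ : ℕ∞) p.height
  · exact hlt.trans_le le_add_self
  have hpos : 1 ≤ p.height :=
    Order.one_le_iff_pos.2 (pos_iff_ne_zero.2 (mt Ideal.height_eq_zero_iff_eq_bot.1 hp))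
  obtain ⟨gens, hgens, hspan⟩ := hG p hpos (hle.trans_lt (by exact_mod_cast Nat.lt_succ_self _))
  have hrank := card_le_card_add_rankAt hπ (LinearMap.exact_iff.1 hφ).le hspan
  have hsub : rankAt φ p + Fintype.card μ ≤ rankAt (φ.submatrix id c) p + Fintype.card κ :=
    rank_add_card_le_rank_submatrix_add_card _ hc
  obtain ⟨h, hh⟩ := ENat.ne_top_iff_exists.1 (ne_top_of_le_ne_top (ENat.natCast_ne_top _) hle)
  rw [← hh] at hgens ⊢
  norm_cast at hgens ⊢
  omega

end ConditionG

theorem jacobian_dual_height_general {k δ ι κ E : Type} [Field k] [Fintype δ] [Fintype ι]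
    [Fintype κ] [AddCommGroup E] [Module (MvPolynomial δ k) E] {e q : ℕ}
    (hcard : Fintype.card ι = Fintype.card κ + e) {φ : Matrix ι κ (MvPolynomial δ k)}
    (hinj : Function.Injective φ.mulVecLin)
    {π : (ι → MvPolynomial δ k) →ₗ[MvPolynomial δ k] E} (hsurj : Function.Surjective π)
    (hexact : Function.Exact φ.mulVecLin π) (hG : SatisfiesG (MvPolynomial δ k) E e (q + 1))
    {c : Fin q → κ} (hc : Function.Injective c) {σ : Matrix δ (Fin q) (MvPolynomial ι k)}
    (hσ : IsJacobianDual (φ.submatrix id c) σ) : htGE (minorsIdeal σ q) 2 := by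
  intro p _ hp
  rw [IsLocalization.AtPrime.ringKrullDim_eq_height p]
  rw [← Fintype.card_fin q] at hG
  exact WithBot.coe_le_coe.2 (two_le_height_of_isJacobianDual
    (fun p _ => card_lt_rankAt_submatrix_add_height hcard hsurj hexact hG hc)
    (card_le_rankAt_submatrix_bot hinj hc) hσ fun f => hp (Ideal.subset_span ⟨f, id, rfl⟩))

theorem jacobian_dual_height
    (d e : ℕ) (hd : 3 ≤ d)
    (E : Type) [AddCommGroup E] [Module (MvPolynomial (Fin d) k) E]
    [Module.Finite (MvPolynomial (Fin d) k) E]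
    -- `E` is torsion-free
    (htf : Submodule.torsion (MvPolynomial (Fin d) k) E = ⊥)
    -- `0 → R^d →φ R^{d+e} →π E → 0` is a (minimal) free resolution, so `pd E = 1`,
    -- `rank E = e`
    (φ : Matrix (Fin (d + e)) (Fin d) (MvPolynomial (Fin d) k))
    (hinj : Function.Injective φ.mulVecLin)
    (π : (Fin (d + e) → MvPolynomial (Fin d) k) →ₗ[MvPolynomial (Fin d) k] E)
    (hsurj : Function.Surjective π)
    (hker : LinearMap.ker π = LinearMap.range φ.mulVecLin)
    -- `φ = [φ′ | φ″]`: the first `d−2` columns are linear, the last two are quadrics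
    (hdeg : ∀ (i : Fin (d + e)) (j : Fin d),
      ((j : ℕ) < d - 2 → φ i j ∈ homogeneousSubmodule (Fin d) k 1) ∧
      (d - 2 ≤ (j : ℕ) → φ i j ∈ homogeneousSubmodule (Fin d) k 2))
    -- `I_1(φ) = (x_1,…,x_d)`
    (hI1 : Ideal.span {r : MvPolynomial (Fin d) k | ∃ i j, φ i j = r} =
      Ideal.span (Set.range X))
    -- `E` is minimally generated by `μ(E) = d+e` elements
    (hμ : ∀ s : Finset E, Submodule.span (MvPolynomial (Fin d) k) (s : Set E) = ⊤ →
      d + e ≤ s.card)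
    -- `E` satisfies `G_d`
    (hGd : ∀ (p : Ideal (MvPolynomial (Fin d) k)) (_ : p.IsPrime) (c : ℕ),
      ringKrullDim (Localization.AtPrime p) = (c : WithBot ℕ∞) → 1 ≤ c → c ≤ d - 1 →
      ∃ s : Finset (LocalizedModule p.primeCompl E), s.card ≤ c + e - 1 ∧
        Submodule.span (Localization.AtPrime p)
          (s : Set (LocalizedModule p.primeCompl E)) = ⊤)
    -- the defining ideal `L` of the symmetric algebra: `[ℓ_1 … ℓ_d] = [y_1 … y_{d+e}]·φ`
    (ℓ : Fin d → B k d (d + e))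
    (hℓ : ∀ i, ℓ i = ∑ j, (rename Sum.inl (φ j i)) * X (Sum.inr j))
    (L : Ideal (B k d (d + e))) (hL : L = Ideal.span (Set.range ℓ))
    -- the Jacobian dual `σ = B(φ′)` of the linear part `φ′` of `φ`
    (σ : Matrix (Fin d) (Fin (d - 2)) (T k (d + e)))
    (hσlin : ∀ t j, σ t j ∈ homogeneousSubmodule (Fin (d + e)) k 1)
    (hσ : ∀ j : Fin (d - 2),
      ℓ (Fin.castLE (by omega) j) =
        ∑ t : Fin d, X (Sum.inl t) * (rename Sum.inr (σ t j) : B k d (d + e))) :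
    htGE (minorsIdeal σ (d - 2)) 2 := by
  refine jacobian_dual_height_general (by simp) hinj hsurj (LinearMap.exact_iff.2 hker)
    ((satisfiesG_of_ringKrullDim hGd).mono (by omega)) (Fin.castLE_injective (d.sub_le 2))
    (isJacobianDual_of_rename fun j => ?_)
  exact (hℓ _).symm.trans (hσ j)

end Stmt8
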